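/- arXiv:2506.04094 — 5 statements merged into one kernel-verified Lean document; each statement's English description precedes it below -/
import Mathlib

section
/- Let n ≥ 1 and let q_0, …, q_n be positive integers. For any nonempty subset I ⊆ {0, …, n} set l_I = (∏_{i∈I} q_i) / gcd_{i∈I}(q_i), and for 0 ≤ r ≤ n set l_r = lcm{ l_I : I ⊆ {0,…,n}, |I| = r+1 }. Then for all nonnegative integers k, j with k + j ≤ n, the integer l_{k+j} divides l_k · l_j. (This is the integrality of the structure constants ξ_k · ξ_j = (l_k l_j / l_{k+j}) ξ_{k+j} in the integral cohomology ring of the weighted projective space ℙ(q_0,…,q_n).) -/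
/-- For a nonempty subset `I ⊆ {0, …, n}`, `lI q I = (∏_{i∈I} q_i) / gcd_{i∈I}(q_i)`. -/
def lI {n : ℕ} (q : Fin (n + 1) → ℕ) (I : Finset (Fin (n + 1))) : ℕ :=
  (∏ i ∈ I, q i) / I.gcd q

/-- `lr q r = lcm { lI q I : I ⊆ {0,…,n}, |I| = r + 1 }`. -/
def lr {n : ℕ} (q : Fin (n + 1) → ℕ) (r : ℕ) : ℕ :=
  (Finset.powersetCard (r + 1) (Finset.univ : Finset (Fin (n + 1)))).lcm (lI q)

/-!
Dividing the product over `I` by the gcd of the `q m` gives the lcm of its quotients by the single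
`q m`, so `l_I` is the lcm, over `m ∈ I`, of the products of the `q i` with `i ∈ I \ {m}`. Since
every set of `r ≤ n` indices misses some index, `l_r` is therefore the lcm of the products of `r` of
the `q i`. A product of `k + j` of them is a product of `k` times a product of `j`.
-/

section GCDMonoid

variable {ι α : Type*} [CommMonoidWithZero α] [NormalizedGCDMonoid α]

/-- The lcm of all products of `r` values of `f` at distinct indices in `s`, the analogue of the
elementary symmetric function with the sum replaced by the lcm; it is `1` if `s.card < r`. -/
def lcmProd (s : Finset ι) (f : ι → α) (r : ℕ) : α :=
  (s.powersetCard r).lcm fun t => ∏ i ∈ t, f i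

lemma prod_dvd_lcmProd {s t : Finset ι} (hts : t ⊆ s) (f : ι → α) :
    ∏ i ∈ t, f i ∣ lcmProd s f t.card :=
  Finset.dvd_lcm (Finset.mem_powersetCard.2 ⟨hts, rfl⟩)

lemma lcmProd_add_dvd_mul (s : Finset ι) (f : ι → α) (k j : ℕ) :
    lcmProd s f (k + j) ∣ lcmProd s f k * lcmProd s f j := by
  classical
  refine Finset.lcm_dvd fun t ht => ?_
  obtain ⟨hts, htcard⟩ := Finset.mem_powersetCard.1 ht
  obtain ⟨u, hut, rfl⟩ := Finset.exists_subset_card_eq (htcard ▸ Nat.le_add_right k j)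
  have hcard : (t \ u).card = j := by rw [Finset.card_sdiff_of_subset hut, htcard]; lia
  rw [← Finset.prod_sdiff hut, mul_comm, ← hcard]
  exact mul_dvd_mul (prod_dvd_lcmProd (hut.trans hts) f)
    (prod_dvd_lcmProd (Finset.sdiff_subset.trans hts) f)

lemma associated_gcd_mul_lcm_prod_erase [DecidableEq ι] {s : Finset ι} (hs : s.Nonempty)
    (f : ι → α) :
    Associated (s.gcd f * s.lcm fun m => ∏ i ∈ s.erase m, f i) (∏ i ∈ s, f i) := by
  refine associated_of_dvd_dvd ?_ ?_
  · obtain ⟨l, hl⟩ := hs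
    obtain ⟨c, hc⟩ := (Finset.gcd_dvd hl).trans (Finset.dvd_prod_of_mem f hl)
    rw [hc]
    rcases eq_or_ne (s.gcd f) 0 with hzero | hzero
    · simp only [hzero, zero_mul, dvd_refl]
    refine mul_dvd_mul_left _ (Finset.lcm_dvd fun m hm => ?_)
    rw [← mul_dvd_mul_iff_left hzero, ← hc, ← Finset.mul_prod_erase s f hm]
    exact mul_dvd_mul_right (Finset.gcd_dvd hm) _
  · refine Dvd.dvd.trans (Finset.dvd_gcd fun m hm => ?_) (Finset.gcd_mul_right' s f _).dvd
    rw [← Finset.mul_prod_erase s f hm]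
    exact mul_dvd_mul_left _ (Finset.dvd_lcm hm)

end GCDMonoid

section WeightedProjectiveSpace

variable {n : ℕ} {q : Fin (n + 1) → ℕ}

lemma lI_eq_lcm_prod_erase {I : Finset (Fin (n + 1))} {m : Fin (n + 1)} (hm : m ∈ I)
    (hqm : 0 < q m) : lI q I = I.lcm fun l => ∏ i ∈ I.erase l, q i := by
  have hgcd : 0 < I.gcd q := Nat.pos_of_dvd_of_pos (Finset.gcd_dvd hm) hqm
  have hmul : I.gcd q * (I.lcm fun l => ∏ i ∈ I.erase l, q i) = ∏ i ∈ I, q i :=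
    associated_iff_eq.1 (associated_gcd_mul_lcm_prod_erase ⟨m, hm⟩ q)
  exact Nat.div_eq_of_eq_mul_right hgcd hmul.symm

lemma lr_eq_lcmProd (hq : ∀ i, 0 < q i) {r : ℕ} (hr : r ≤ n) :
    lr q r = lcmProd Finset.univ q r := by
  refine Nat.dvd_antisymm (Finset.lcm_dvd fun I hI => ?_) (Finset.lcm_dvd fun A hA => ?_)
  · have hIcard := (Finset.mem_powersetCard.1 hI).2
    obtain ⟨m, hm⟩ : I.Nonempty := Finset.card_pos.1 (by lia)
    rw [lI_eq_lcm_prod_erase hm (hq m)]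
    refine Finset.lcm_dvd fun l hl => ?_
    have hcard : (I.erase l).card = r := by rw [Finset.card_erase_of_mem hl]; lia
    exact hcard ▸ prod_dvd_lcmProd (Finset.subset_univ _) q
  · have hAcard := (Finset.mem_powersetCard.1 hA).2
    obtain ⟨m, -, hm⟩ : ∃ m ∈ Finset.univ, m ∉ A :=
      Finset.exists_mem_notMem_of_card_lt_card (by rw [hAcard, Finset.card_fin]; lia)
    have hcard : (insert m A).card = r + 1 := by rw [Finset.card_insert_of_notMem hm, hAcard]
    have hmem : m ∈ insert m A := Finset.mem_insert_self m A
    calc ∏ i ∈ A, q i = ∏ i ∈ (insert m A).erase m, q i := by rw [Finset.erase_insert hm]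
      _ ∣ (insert m A).lcm fun l => ∏ i ∈ (insert m A).erase l, q i := Finset.dvd_lcm hmem
      _ = lI q (insert m A) := (lI_eq_lcm_prod_erase hmem (hq m)).symm
      _ ∣ lr q r :=
        Finset.dvd_lcm (Finset.mem_powersetCard.2 ⟨Finset.subset_univ _, hcard⟩)

end WeightedProjectiveSpace

/-- Integrality of the structure constants `ξ_k · ξ_j = (l_k l_j / l_{k+j}) ξ_{k+j}`:
for `k + j ≤ n`, the integer `l_{k+j}` divides `l_k · l_j`. -/
theorem lr_add_dvd_mul {n : ℕ} (hn : 1 ≤ n) (q : Fin (n + 1) → ℕ) (hq : ∀ i, 0 < q i)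
    (k j : ℕ) (hkj : k + j ≤ n) :
    lr q (k + j) ∣ lr q k * lr q j := by
  rw [lr_eq_lcmProd hq hkj, lr_eq_lcmProd hq (Nat.le_of_add_right_le hkj),
    lr_eq_lcmProd hq (Nat.le_of_add_left_le hkj)]
  exact lcmProd_add_dvd_mul Finset.univ q k j
end

section
/- Let n ≥ 1 and let q_0, …, q_n be positive integers, and define l_r as the lcm of l_I = (∏_{i∈I} q_i)/gcd_{i∈I}(q_i) over all subsets I ⊆ {0,…,n} of cardinality r+1. Then for every 0 ≤ r ≤ n−1, the integer l_r divides l_{r+1}. -/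
theorem gcd_dvd_prod {ι α : Type*} [CommMonoidWithZero α] [NormalizedGCDMonoid α]
    {s : Finset ι} (hs : s.Nonempty) (f : ι → α) : s.gcd f ∣ ∏ i ∈ s, f i :=
  let ⟨_, hi⟩ := hs
  (Finset.gcd_dvd hi).trans (Finset.dvd_prod_of_mem f hi)

theorem prod_div_gcd_dvd_of_subset {ι : Type*} {s t : Finset ι} (hs : s.Nonempty) (hst : s ⊆ t)
    (f : ι → ℕ) : (∏ i ∈ s, f i) / s.gcd f ∣ (∏ i ∈ t, f i) / t.gcd f := by
  have gcd_dvd_gcd : t.gcd f ∣ s.gcd f := Finset.gcd_mono hst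
  have gcd_dvd : s.gcd f ∣ ∏ i ∈ s, f i := gcd_dvd_prod hs f
  calc (∏ i ∈ s, f i) / s.gcd f
    _ ∣ (∏ i ∈ s, f i) / t.gcd f := Nat.div_dvd_div_left gcd_dvd gcd_dvd_gcd
    _ ∣ (∏ i ∈ t, f i) / t.gcd f :=
      Nat.div_dvd_div (gcd_dvd_gcd.trans gcd_dvd) (Finset.prod_dvd_prod_of_subset s t f hst)

theorem lcm_powersetCard_dvd_lcm_powersetCard {ι α : Type*} [CommMonoidWithZero α]
    [NormalizedGCDMonoid α] {g : Finset ι → α} {u : Finset ι} {k m : ℕ} (hkm : k ≤ m)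
    (hmu : m ≤ u.card) (hg : ∀ s t, s.card = k → s ⊆ t → g s ∣ g t) :
    (u.powersetCard k).lcm g ∣ (u.powersetCard m).lcm g := by
  refine Finset.lcm_dvd fun s hs ↦ ?_
  obtain ⟨hsu, hsk⟩ := Finset.mem_powersetCard.mp hs
  obtain ⟨t, hst, htu, htm⟩ := Finset.exists_subsuperset_card_eq hsu (hsk.trans_le hkm) hmu
  exact (hg s t hsk hst).trans (Finset.dvd_lcm (Finset.mem_powersetCard.mpr ⟨htu, htm⟩))

/-- For `0 ≤ r ≤ n - 1`, the integer `l_r` divides `l_{r+1}`. -/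
theorem lr_dvd_lr_succ {n : ℕ} (hn : 1 ≤ n) (q : Fin (n + 1) → ℕ) (hq : ∀ i, 0 < q i)
    (r : ℕ) (hr : r ≤ n - 1) :
    lr q r ∣ lr q (r + 1) := by
  have lI_dvd (I J : Finset (Fin (n + 1))) (hI : I.card = r + 1) (hIJ : I ⊆ J) :
      lI q I ∣ lI q J :=
    prod_div_gcd_dvd_of_subset (Finset.card_pos.mp (hI ▸ r.succ_pos)) hIJ q
  have card_le : r + 1 + 1 ≤ (Finset.univ : Finset (Fin (n + 1))).card := by
    rw [Finset.card_fin]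
    omega
  exact lcm_powersetCard_dvd_lcm_powersetCard (Nat.le_succ (r + 1)) card_le lI_dvd
end

section
/- Let n ≥ 1 and let q_0, …, q_n be pairwise coprime positive integers (gcd(q_i, q_j) = 1 for all i ≠ j). Then for every r with 1 ≤ r ≤ n, one has l_r = q_0 · q_1 · ⋯ · q_n, where l_r is the lcm of l_I = (∏_{i∈I} q_i)/gcd_{i∈I}(q_i) over all subsets I ⊆ {0,…,n} of cardinality r+1. (Consequently, for pairwise coprime weights the ratios l_r · l_{n−r} / l_n appearing in the pullback formula equal ∏ q_i for 1 ≤ r ≤ n−1.) -/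
/-! Two coprime weights in `I` force the gcd in `lI q I` to be `1`, so for `r ≥ 1` every term of the
lcm `lr q r` is a plain product of weights. By coprimality the lcm of such products is the product
over the union of the index sets, and the `(r + 1)`-subsets cover all indices because `r ≤ n`. -/

theorem associated_lcm_prod_prod_sup {ι α : Type*} [DecidableEq ι] [CommMonoidWithZero α]
    [NormalizedGCDMonoid α] {S : Finset (Finset ι)} {f : ι → α}
    (hf : Set.Pairwise (S.sup id : Finset ι) (IsRelPrime.onFun f)) :
    Associated (S.lcm fun I ↦ ∏ i ∈ I, f i) (∏ i ∈ S.sup id, f i) := by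
  refine associated_of_dvd_dvd
    (Finset.lcm_dvd fun I hI ↦ Finset.prod_dvd_prod_of_subset _ _ _ (Finset.le_sup (f := id) hI))
    (Finset.prod_dvd_of_isRelPrime hf fun i hi ↦ ?_)
  obtain ⟨I, hI, hiI⟩ := Finset.mem_sup.mp hi
  exact (Finset.dvd_prod_of_mem f hiI).trans (Finset.dvd_lcm hI)

theorem lI_eq_prod_of_coprime {n : ℕ} {q : Fin (n + 1) → ℕ} {I : Finset (Fin (n + 1))}
    {i j : Fin (n + 1)} (hi : i ∈ I) (hj : j ∈ I) (hij : Nat.Coprime (q i) (q j)) :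
    lI q I = ∏ k ∈ I, q k := by
  have hgcd : I.gcd q = 1 :=
    Nat.eq_one_of_dvd_coprimes hij (Finset.gcd_dvd hi) (Finset.gcd_dvd hj)
  rw [lI, hgcd, Nat.div_one]

/-- For pairwise coprime positive weights `q_0, …, q_n` and `1 ≤ r ≤ n`,
one has `l_r = q_0 · q_1 · ⋯ · q_n`. -/
theorem lr_eq_prod_of_pairwise_coprime {n : ℕ} (hn : 1 ≤ n) (q : Fin (n + 1) → ℕ)
    (hq : ∀ i, 0 < q i) (hcop : ∀ i j, i ≠ j → Nat.Coprime (q i) (q j))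
    (r : ℕ) (hr1 : 1 ≤ r) (hrn : r ≤ n) :
    lr q r = ∏ i, q i := by
  have lI_eq : ∀ I ∈ Finset.powersetCard (r + 1) Finset.univ, lI q I = ∏ i ∈ I, q i := by
    intro I hI
    have hcard : 1 < I.card := by
      rw [(Finset.mem_powersetCard.mp hI).2]
      omega
    obtain ⟨i, hi, j, hj, hij⟩ := Finset.one_lt_card.mp hcard
    exact lI_eq_prod_of_coprime hi hj (hcop i j hij)
  have sup_eq : (Finset.powersetCard (r + 1) (Finset.univ : Finset (Fin (n + 1)))).sup id =
      Finset.univ :=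
    Finset.powersetCard_sup _ r (by simpa [Nat.lt_succ_iff] using hrn)
  calc
    lr q r = (Finset.powersetCard (r + 1) Finset.univ).lcm fun I ↦ ∏ i ∈ I, q i :=
      Finset.lcm_congr rfl lI_eq
    _ = ∏ i ∈ (Finset.powersetCard (r + 1) Finset.univ).sup id, q i :=
      (associated_lcm_prod_prod_sup fun i _ j _ hij ↦
        Nat.coprime_iff_isRelPrime.mp (hcop i j hij)).eq_of_normalized
          (normalize_eq _) (normalize_eq _)
    _ = ∏ i, q i := by rw [sup_eq]
end

section
/- Let n ≥ 1 and let q_0, …, q_n be positive integers, with ℂ* acting on ℂ^{n+1} ∖ {0} by λ · (x_0, …, x_n) = (λ^{q_0} x_0, …, λ^{q_n} x_n). Then the weights q_0, …, q_n are pairwise coprime if and only if every point x ∈ ℂ^{n+1} ∖ {0} with at least two nonzero coordinates has trivial stabilizer, i.e., for every such x and every λ ∈ ℂ*, λ · x = x implies λ = 1. (This is the orbit-space formulation of the fact that the weighted projective space ℙ(q_0,…,q_n) has at worst isolated singularities exactly when the weights are pairwise coprime.) -/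
/-!
A point `x` is fixed by `l` exactly when `l ^ q i = 1` for every `i` in the support of `x`, so
everything reduces to the solutions of `l ^ q i = l ^ q j = 1` for `i ≠ j`. Their orders divide
`gcd (q i) (q j)`, so only `l = 1` remains if the weights are coprime. Otherwise some prime `p`
divides both weights, and an element of order `p` fixes the indicator function of `{i, j}`.
-/

open Function

theorem exists_isUnit_ne_one_pow_eq_one_of_not_coprime {M : Type*} [Monoid M]
    (hM : ∀ p : ℕ, p.Prime → ∃ ζ : M, orderOf ζ = p) {a b : ℕ} (hab : ¬a.Coprime b) :
    ∃ ζ : M, IsUnit ζ ∧ ζ ≠ 1 ∧ ζ ^ a = 1 ∧ ζ ^ b = 1 := by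
  obtain ⟨p, hp, hpa, hpb⟩ := Nat.Prime.not_coprime_iff_dvd.mp hab
  obtain ⟨ζ, rfl⟩ := hM p hp
  exact ⟨ζ, (orderOf_pos_iff.mp hp.pos).isUnit, fun h => hp.ne_one (orderOf_eq_one_iff.mpr h),
    orderOf_dvd_iff_pow_eq_one.mp hpa, orderOf_dvd_iff_pow_eq_one.mp hpb⟩

section WeightedAction

variable {ι M : Type*} [MonoidWithZero M] [IsRightCancelMulZero M]

theorem forall_pow_mul_eq_self_iff {q : ι → ℕ} {x : ι → M} {l : M} :
    (∀ i, l ^ q i * x i = x i) ↔ ∀ i ∈ support x, l ^ q i = 1 := by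
  refine forall_congr' fun i => ?_
  by_cases hi : x i = 0 <;> simp [hi]

theorem coprime_iff_trivial_stabilizer_of_ne_zero
    (hM : ∀ p : ℕ, p.Prime → ∃ ζ : M, orderOf ζ = p) (q : ι → ℕ) (i j : ι) :
    (q i).Coprime (q j) ↔
      ∀ x : ι → M, x i ≠ 0 → x j ≠ 0 →
        ∀ l : M, IsUnit l → (∀ k, l ^ q k * x k = x k) → l = 1 := by
  constructor
  · intro hq x hi hj l _ hfix
    rw [forall_pow_mul_eq_self_iff] at hfix
    exact (pow_eq_one_iff_of_coprime hq).mp ⟨hfix i hi, hfix j hj⟩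
  · intro htriv
    by_contra hq
    obtain ⟨ζ, hζ, hζ_ne, hζi, hζj⟩ := exists_isUnit_ne_one_pow_eq_one_of_not_coprime hM hq
    have : Nontrivial M := nontrivial_of_ne ζ 1 hζ_ne
    have hfix : ∀ k, ζ ^ q k * Set.indicator {i, j} 1 k = Set.indicator {i, j} 1 k := by
      simp [forall_pow_mul_eq_self_iff, hζi, hζj]
    exact hζ_ne (htriv (Set.indicator {i, j} 1) (by simp) (by simp) ζ hζ hfix)

theorem pairwise_coprime_iff_trivial_stabilizer_general
    (hM : ∀ p : ℕ, p.Prime → ∃ ζ : M, orderOf ζ = p) (q : ι → ℕ) :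
    (∀ i j, i ≠ j → Nat.Coprime (q i) (q j)) ↔
      ∀ x : ι → M, (∃ i j, i ≠ j ∧ x i ≠ 0 ∧ x j ≠ 0) →
        ∀ l : M, IsUnit l → (∀ i, l ^ q i * x i = x i) → l = 1 := by
  simp only [coprime_iff_trivial_stabilizer_of_ne_zero hM]
  exact ⟨fun h x ⟨i, j, hij, hi, hj⟩ => h i j hij x hi hj,
    fun h i j hij x hi hj => h x ⟨i, j, hij, hi, hj⟩⟩

end WeightedAction

/-- For the weighted `ℂ*`-action `λ · x = (λ^{q_0} x_0, …, λ^{q_n} x_n)` on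
`ℂ^{n+1} ∖ {0}`, the weights `q_0, …, q_n` are pairwise coprime if and only if
every point with at least two nonzero coordinates has trivial stabilizer. -/
theorem pairwise_coprime_iff_trivial_stabilizer {n : ℕ} (hn : 1 ≤ n)
    (q : Fin (n + 1) → ℕ) (hq : ∀ i, 0 < q i) :
    (∀ i j, i ≠ j → Nat.Coprime (q i) (q j)) ↔
      ∀ x : Fin (n + 1) → ℂ, (∃ i j, i ≠ j ∧ x i ≠ 0 ∧ x j ≠ 0) →
        ∀ l : ℂ, l ≠ 0 → (∀ i, l ^ q i * x i = x i) → l = 1 := by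
  simpa only [isUnit_iff_ne_zero] using pairwise_coprime_iff_trivial_stabilizer_general
    (fun p hp => ⟨_, (Complex.isPrimitiveRoot_exp p hp.ne_zero).eq_orderOf.symm⟩) q
end

section
/- Let q_0, …, q_n be positive integers and let φ : ℙ^n → ℙ(q_0,…,q_n) be the map induced by (x_0, …, x_n) ↦ (x_0^{q_0}, …, x_n^{q_n}) on the quotients of ℂ^{n+1} ∖ {0} by the standard and by the weighted ℂ*-actions, respectively. Then for every point y ∈ ℂ^{n+1} with all coordinates nonzero, the fiber φ^{-1}([y]) over the weighted orbit class [y] ∈ ℙ(q_0,…,q_n) is a finite set of cardinality exactly (q_0 · q_1 · ⋯ · q_n) / gcd(q_0, …, q_n). (This is the degree of the map φ.) -/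
/-!
The torus `T = (ℂ*)^{n+1}` acts on `ℂ^{n+1} ∖ {0}` and on each of its weighted quotients. If two
points have the same coordinatewise powers `x_i ^ q_i`, they differ by an element of
`H = ∏ μ_{q_i} ⊆ T`; hence the fiber of `φ` over `φ [x]` is the `H`-orbit of `[x]` in `ℙ^n`. When
all coordinates of `x` are nonzero, the stabilizer of `[x]` in `T` is the diagonal `ℂ*`, which
meets `H` in the group of `gcd(q_0, …, q_n)`-th roots of unity. By the orbit-stabilizer theorem
the fiber has `|H| / gcd(q_0, …, q_n)` elements.
-/

/-- The punctured affine space `ℂ^{n+1} ∖ {0}`. -/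
abbrev PuncturedAffine (n : ℕ) : Type := {x : Fin (n + 1) → ℂ // x ≠ 0}

/-- The orbit relation of the weighted `ℂ*`-action
`λ · (x_0, …, x_n) = (λ^{q_0} x_0, …, λ^{q_n} x_n)` on `ℂ^{n+1} ∖ {0}`;
the quotient `Quot (weightedRel q)` is the weighted projective space `ℙ(q_0,…,q_n)`
(for `q = 1` it is the ordinary projective space `ℙ^n`). -/
def weightedRel {n : ℕ} (q : Fin (n + 1) → ℕ) (x y : PuncturedAffine n) : Prop :=
  ∃ l : ℂ, l ≠ 0 ∧ ∀ i, l ^ q i * x.1 i = y.1 i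

theorem pow_finset_gcd_eq_one_iff {M ι : Type*} [Monoid M] {s : Finset ι} {q : ι → ℕ} {a : M} :
    a ^ s.gcd q = 1 ↔ ∀ i ∈ s, a ^ q i = 1 := by
  simp only [← orderOf_dvd_iff_pow_eq_one, Finset.dvd_gcd_iff]

theorem exists_rootsOfUnity_mul_eq_of_pow_eq_pow {K : Type*} [CommGroupWithZero K] {k : ℕ}
    (hk : k ≠ 0) {a b : K} (h : a ^ k = b ^ k) : ∃ ζ ∈ rootsOfUnity k K, (ζ : K) * a = b := by
  rcases eq_or_ne a 0 with rfl | ha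
  · have hb : b = 0 := by rwa [zero_pow hk, eq_comm, pow_eq_zero_iff hk] at h
    exact ⟨1, one_mem _, by rw [hb, mul_zero]⟩
  · have hb : b ≠ 0 := fun hb => pow_ne_zero k ha (by rw [h, hb, zero_pow hk])
    refine ⟨Units.mk0 (b / a) (div_ne_zero hb ha), ?_, div_mul_cancel₀ b ha⟩
    rw [mem_rootsOfUnity', Units.val_mk0, div_pow, h, div_self (pow_ne_zero k hb)]

section PiRootsOfUnity

variable {ι : Type*} (q : ι → ℕ)

/-- The group `∏ i, μ_{q i}` of families of roots of unity of `M` of prescribed orders, as a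
subgroup of the torus `ι → Mˣ`. -/
def piRootsOfUnity (M : Type*) [CommMonoid M] : Subgroup (ι → Mˣ) :=
  Subgroup.pi Set.univ fun i => rootsOfUnity (q i) M

/-- The elements of `piRootsOfUnity q M` as families of elements of the groups `μ_{q i}`. -/
def piRootsOfUnityEquiv (M : Type*) [CommMonoid M] :
    piRootsOfUnity q M ≃ ∀ i, rootsOfUnity (q i) M :=
  Equiv.Set.univPi fun i => (rootsOfUnity (q i) M : Set Mˣ)

variable {q} in
theorem mem_piRootsOfUnity {M : Type*} [CommMonoid M] {t : ι → Mˣ} :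
    t ∈ piRootsOfUnity q M ↔ ∀ i, t i ∈ rootsOfUnity (q i) M := by
  simp only [piRootsOfUnity, Subgroup.mem_pi, Set.mem_univ, true_imp_iff]

theorem range_constMonoidHom_inf_piRootsOfUnity [Fintype ι] (M : Type*) [CommMonoid M] :
    (Pi.constMonoidHom ι Mˣ).range ⊓ piRootsOfUnity q M =
      (rootsOfUnity (Finset.univ.gcd q) M).map (Pi.constMonoidHom ι Mˣ) := by
  have mem_gcd (l : Mˣ) : l ∈ rootsOfUnity (Finset.univ.gcd q) M ↔
      Pi.constMonoidHom ι Mˣ l ∈ piRootsOfUnity q M := by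
    simp [mem_piRootsOfUnity, mem_rootsOfUnity, pow_finset_gcd_eq_one_iff]
  ext t
  constructor
  · rintro ⟨⟨l, rfl⟩, hl⟩
    exact ⟨l, (mem_gcd l).2 hl, rfl⟩
  · rintro ⟨l, hl, rfl⟩
    exact ⟨⟨l, rfl⟩, (mem_gcd l).1 hl⟩

variable [∀ i, NeZero (q i)] (M : Type*) [CommMonoid M] [∀ i, HasEnoughRootsOfUnity M (q i)]

instance [Finite ι] : Finite (piRootsOfUnity q M) :=
  .of_equiv _ (piRootsOfUnityEquiv q M).symm

variable [Fintype ι]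

theorem card_piRootsOfUnity : Nat.card (piRootsOfUnity q M) = ∏ i, q i := calc
  Nat.card (piRootsOfUnity q M) = Nat.card (∀ i, rootsOfUnity (q i) M) :=
    Nat.card_congr (piRootsOfUnityEquiv q M)
  _ = ∏ i, Nat.card (rootsOfUnity (q i) M) := Nat.card_pi
  _ = ∏ i, q i := by simp only [HasEnoughRootsOfUnity.natCard_rootsOfUnity]

theorem relIndex_range_constMonoidHom_piRootsOfUnity [Nonempty ι] :
    (Pi.constMonoidHom ι Mˣ).range.relIndex (piRootsOfUnity q M) =
      (∏ i, q i) / Finset.univ.gcd q := by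
  obtain ⟨i⟩ := ‹Nonempty ι›
  have gcd_dvd : Finset.univ.gcd q ∣ q i := Finset.gcd_dvd (Finset.mem_univ i)
  have : NeZero (Finset.univ.gcd q) := ⟨ne_zero_of_dvd_ne_zero (NeZero.ne (q i)) gcd_dvd⟩
  have : HasEnoughRootsOfUnity M (Finset.univ.gcd q) := .of_dvd M gcd_dvd
  have card_diagonal : Nat.card ↥((Pi.constMonoidHom ι Mˣ).range ⊓ piRootsOfUnity q M) =
      Finset.univ.gcd q := by
    rw [range_constMonoidHom_inf_piRootsOfUnity,
      Subgroup.card_map_of_injective fun _ _ h => congrFun h i,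
      HasEnoughRootsOfUnity.natCard_rootsOfUnity]
  rw [← Subgroup.inf_relIndex_right, ← card_piRootsOfUnity q M, ← card_diagonal]
  refine Nat.eq_div_of_mul_eq_right (card_diagonal ▸ NeZero.ne _) ?_
  simpa only [Subgroup.relIndex_bot_left] using
    Subgroup.relIndex_mul_relIndex ⊥ _ (piRootsOfUnity q M) bot_le inf_le_right

end PiRootsOfUnity

/-- The one-parameter subgroup `l ↦ (l ^ w i)_i` of a torus, through which scalars act with
weights `w`. -/
def weightHom {ι M : Type*} [CommMonoid M] (w : ι → ℕ) : M →* (ι → M) :=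
  MonoidHom.pi fun i => powMonoidHom (w i)

theorem weightHom_one (ι M : Type*) [CommMonoid M] :
    weightHom (fun _ => 1) = Pi.constMonoidHom ι M := by
  ext l _
  exact pow_one l

section TorusAction

variable {n : ℕ}

instance : SMul (Fin (n + 1) → ℂˣ) (PuncturedAffine n) where
  smul t x := ⟨t • x.1, fun h => x.2 ((smul_eq_zero_iff_eq t).1 h)⟩

instance : MulAction (Fin (n + 1) → ℂˣ) (PuncturedAffine n) where
  one_smul x := Subtype.ext (one_smul _ x.1)
  mul_smul s t x := Subtype.ext (mul_smul s t x.1)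

theorem PuncturedAffine.smul_apply (t : Fin (n + 1) → ℂˣ) (x : PuncturedAffine n)
    (i : Fin (n + 1)) : (t • x).1 i = t i * x.1 i := rfl

theorem PuncturedAffine.smul_left_injective {x : PuncturedAffine n} (hx : ∀ i, x.1 i ≠ 0) :
    Function.Injective fun t : Fin (n + 1) → ℂˣ => t • x := fun _ _ h =>
  funext fun i => Units.ext <| mul_right_cancel₀ (hx i) (congrFun (congrArg Subtype.val h) i)

variable {w : Fin (n + 1) → ℕ}

theorem weightedRel_iff_exists_smul_eq {x y : PuncturedAffine n} :
    weightedRel w x y ↔ ∃ l : ℂˣ, weightHom w l • x = y := by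
  constructor
  · rintro ⟨l, hl, h⟩
    exact ⟨Units.mk0 l hl, Subtype.ext (funext h)⟩
  · rintro ⟨l, rfl⟩
    exact ⟨l, l.ne_zero, fun i => rfl⟩

theorem weightedRel_eq_orbitRel (w : Fin (n + 1) → ℕ) :
    weightedRel w = MulAction.orbitRel (weightHom (M := ℂˣ) w).range (PuncturedAffine n) := by
  ext x y
  rw [weightedRel_iff_exists_smul_eq, MulAction.orbitRel_apply, MulAction.mem_orbit_symm]
  simp [MulAction.mem_orbit_iff, Subgroup.smul_def]

theorem weightedRel_equivalence (w : Fin (n + 1) → ℕ) : Equivalence (weightedRel w) :=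
  weightedRel_eq_orbitRel w ▸ (MulAction.orbitRel _ _).iseqv

theorem mk_weightedRel_eq_iff {x y : PuncturedAffine n} :
    Quot.mk (weightedRel w) x = Quot.mk (weightedRel w) y ↔ ∃ l : ℂˣ, weightHom w l • x = y :=
  ((weightedRel_equivalence w).quot_mk_eq_iff x y).trans weightedRel_iff_exists_smul_eq

instance : MulAction (Fin (n + 1) → ℂˣ) (Quot (weightedRel w)) where
  smul t := Quot.map (t • ·) fun x y h => by
    obtain ⟨l, rfl⟩ := weightedRel_iff_exists_smul_eq.1 h
    exact weightedRel_iff_exists_smul_eq.2 ⟨l, by simp only [smul_smul, mul_comm]⟩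
  one_smul := Quot.ind fun x => congrArg _ (one_smul _ x)
  mul_smul s t := Quot.ind fun x => congrArg _ (mul_smul s t x)

theorem smul_mk_weightedRel (t : Fin (n + 1) → ℂˣ) (x : PuncturedAffine n) :
    t • Quot.mk (weightedRel w) x = Quot.mk (weightedRel w) (t • x) := rfl

theorem stabilizer_mk_weightedRel {x : PuncturedAffine n} (hx : ∀ i, x.1 i ≠ 0) :
    MulAction.stabilizer (Fin (n + 1) → ℂˣ) (Quot.mk (weightedRel w) x) =
      (weightHom w).range := by
  ext t
  rw [MulAction.mem_stabilizer_iff, smul_mk_weightedRel, eq_comm, mk_weightedRel_eq_iff,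
    MonoidHom.mem_range]
  exact exists_congr fun l => (PuncturedAffine.smul_left_injective hx).eq_iff

end TorusAction

section PowerMap

variable {n : ℕ} {q : Fin (n + 1) → ℕ}

theorem PuncturedAffine.exists_eq_pow (hq : ∀ i, 0 < q i) (y : PuncturedAffine n) :
    ∃ x : PuncturedAffine n, ∀ i, y.1 i = x.1 i ^ q i := by
  choose x hx using fun i => IsAlgClosed.exists_pow_nat_eq (y.1 i) (hq i)
  refine ⟨⟨x, ?_⟩, fun i => (hx i).symm⟩
  rintro rfl
  exact y.2 (funext fun i => by rw [← hx i, Pi.zero_apply, zero_pow (hq i).ne'])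

theorem PuncturedAffine.exists_piRootsOfUnity_smul_eq (hq : ∀ i, 0 < q i)
    {x z : PuncturedAffine n} (h : ∀ i, x.1 i ^ q i = z.1 i ^ q i) :
    ∃ t ∈ piRootsOfUnity q ℂ, t • x = z := by
  choose t ht htx using fun i => exists_rootsOfUnity_mul_eq_of_pow_eq_pow (hq i).ne' (h i)
  exact ⟨t, mem_piRootsOfUnity.2 ht, Subtype.ext (funext htx)⟩

theorem preimage_mk_eq_orbit (hq : ∀ i, 0 < q i)
    {φ : Quot (weightedRel (n := n) fun _ => 1) → Quot (weightedRel q)}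
    (hφ : ∀ x y : PuncturedAffine n, (∀ i, y.1 i = x.1 i ^ q i) →
      φ (Quot.mk _ x) = Quot.mk _ y)
    {x y : PuncturedAffine n} (hxy : ∀ i, y.1 i = x.1 i ^ q i) :
    φ ⁻¹' {Quot.mk _ y} = MulAction.orbit (piRootsOfUnity q ℂ) (Quot.mk _ x) := by
  ext p
  constructor
  · induction p using Quot.ind with | mk z
    intro hz
    have hpow : (fun i => z.1 i ^ q i) ≠ 0 := fun h =>
      z.2 (funext fun i => eq_zero_of_pow_eq_zero (congrFun h i))
    obtain ⟨l, hl⟩ := mk_weightedRel_eq_iff.1 ((hφ z ⟨_, hpow⟩ fun _ => rfl).symm.trans hz)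
    have hroots (i) : x.1 i ^ q i = (weightHom (fun _ : Fin (n + 1) => 1) l • z).1 i ^ q i := by
      rw [← hxy i, ← hl]
      simp [PuncturedAffine.smul_apply, weightHom, mul_pow]
    obtain ⟨t, ht, htx⟩ := PuncturedAffine.exists_piRootsOfUnity_smul_eq hq hroots
    exact ⟨⟨t, ht⟩, (congrArg (Quot.mk _) htx).trans (mk_weightedRel_eq_iff.2 ⟨l, rfl⟩).symm⟩
  · rintro ⟨⟨t, ht⟩, rfl⟩
    refine hφ (t • x) y fun i => ?_
    have hti : (t i : ℂ) ^ q i = 1 := (mem_rootsOfUnity' _ _).1 (mem_piRootsOfUnity.1 ht i)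
    rw [PuncturedAffine.smul_apply, mul_pow, hti, one_mul, hxy i]

end PowerMap

/-- If `φ : ℙ^n → ℙ(q_0,…,q_n)` is the map induced by
`(x_0, …, x_n) ↦ (x_0^{q_0}, …, x_n^{q_n})`, then the fiber of `φ` over the class of
any point `y` with all coordinates nonzero is a finite set of cardinality exactly
`(q_0 ⋯ q_n) / gcd(q_0, …, q_n)` — the degree of `φ`. -/
theorem powerMap_fiber_card {n : ℕ} (q : Fin (n + 1) → ℕ) (hq : ∀ i, 0 < q i)
    (φ : Quot (weightedRel (n := n) fun _ => 1) → Quot (weightedRel q))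
    (hφ : ∀ x y : PuncturedAffine n, (∀ i, y.1 i = x.1 i ^ q i) →
      φ (Quot.mk _ x) = Quot.mk _ y)
    (y : PuncturedAffine n) (hy : ∀ i, y.1 i ≠ 0) :
    (φ ⁻¹' {Quot.mk _ y}).Finite ∧
      Nat.card (φ ⁻¹' {Quot.mk _ y}) =
        (∏ i, q i) / (Finset.univ : Finset (Fin (n + 1))).gcd q := by
  have (i : Fin (n + 1)) : NeZero (q i) := ⟨(hq i).ne'⟩
  obtain ⟨x, hxy⟩ := PuncturedAffine.exists_eq_pow hq y
  have hx (i) : x.1 i ≠ 0 := ne_zero_pow (hq i).ne' (hxy i ▸ hy i)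
  rw [preimage_mk_eq_orbit hq hφ hxy]
  refine ⟨Set.finite_range _, ?_⟩
  let p : Quot (weightedRel fun _ => 1) := Quot.mk _ x
  calc Nat.card (MulAction.orbit (piRootsOfUnity q ℂ) p)
      = (MulAction.stabilizer (piRootsOfUnity q ℂ) p).index :=
        (MulAction.index_stabilizer _ p).symm
    _ = (MulAction.stabilizer (Fin (n + 1) → ℂˣ) p).relIndex (piRootsOfUnity q ℂ) := rfl
    _ = (Pi.constMonoidHom (Fin (n + 1)) ℂˣ).range.relIndex (piRootsOfUnity q ℂ) := by
        rw [stabilizer_mk_weightedRel hx, weightHom_one]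
    _ = (∏ i, q i) / Finset.univ.gcd q :=
        relIndex_range_constMonoidHom_piRootsOfUnity q ℂ
end
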